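/- For every integer d ≥ 2 and every d-weighting α of a finite rooted tree Γ, any two distinct members of ⋃_{q∈V} Γ_α(q) have at most one edge of Γ in common. (Property 2(a) of the Proposition on linear-proximity structures.) -/

import Mathlib

/-- A finite rooted tree: a distinguished root, a parent map fixing the root,
and a depth function witnessing that iterating the parent map reaches the root. -/
structure PTree (V : Type) where
  root : V
  parent : V → V
  depth : V → ℕ
  parent_root : parent root = root
  depth_root : depth root = 0
  depth_eq : ∀ v, v ≠ root → depth v = depth (parent v) + 1

namespace PTree

variable {V : Type}

/-- `r ⪰ q` : the descendancy order (`q` lies on the path from `r` to the root). -/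
def desc (T : PTree V) (r q : V) : Prop := ∃ k : ℕ, T.parent^[k] r = q

/-- `r ≻ q`. -/
def sdesc (T : PTree V) (r q : V) : Prop := T.desc r q ∧ r ≠ q

/-- `r ∈ q⁺` : `r` is a child of `q`. -/
def child (T : PTree V) (r q : V) : Prop := T.parent r = q ∧ r ≠ T.root

/-- `w` is a d-weighting of `T` : each non-root vertex gets a weight in `{1,…,d}`,
and distinct children of a common vertex get distinct weights. -/
def IsWeighting (T : PTree V) (d : ℕ) (w : V → ℕ) : Prop :=
  (∀ v, v ≠ T.root → 1 ≤ w v ∧ w v ≤ d) ∧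
    ∀ r s, r ≠ T.root → s ≠ T.root → T.parent r = T.parent s → r ≠ s → w r ≠ w s

/-- The length of the path (code) from `q` up to a descendant `r`. -/
def codeLen (T : PTree V) (r q : V) : ℕ := T.depth r - T.depth q

/-- The code of `r` over `q` has the form `(a, b, b, …, b)` : the first entry is `a` and
every later entry is `b`.  (The `j`-th entry of the code, `1 ≤ j ≤ k`, is the weight of
`parent^[k-j] r`, where `k` is the code length.) -/
def codeAB (T : PTree V) (w : V → ℕ) (q : V) (a b : ℕ) (r : V) : Prop :=
  w (T.parent^[T.codeLen r q - 1] r) = a ∧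
    ∀ i, i + 2 ≤ T.codeLen r q → w (T.parent^[i] r) = b

/-- `Γ_q(a,b)` : the vertex `q` together with all descendants `r ≻ q` whose code over `q`
has the form `(a,b,b,…,b)` or `(b,a,a,…,a)`. -/
def gammaSet (T : PTree V) (w : V → ℕ) (q : V) (a b : ℕ) : Set V :=
  {r | r = q ∨ (T.sdesc r q ∧ (T.codeAB w q a b r ∨ T.codeAB w q b a r))}

/-- `Γ(q)` : the family of the sets `Γ_q(a,b)`, `a ≠ b` in `{1,…,d}`, which are maximal
under inclusion among all such sets. -/
def gammaFam (T : PTree V) (w : V → ℕ) (d : ℕ) (q : V) : Set (Set V) :=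
  {S | ∃ a b : ℕ, a ≠ b ∧ 1 ≤ a ∧ a ≤ d ∧ 1 ≤ b ∧ b ≤ d ∧ S = T.gammaSet w q a b ∧
    ∀ a' b' : ℕ, a' ≠ b' → 1 ≤ a' → a' ≤ d → 1 ≤ b' → b' ≤ d →
      S ⊆ T.gammaSet w q a' b' → S = T.gammaSet w q a' b'}

/-- `S` is a chain rooted at `q` : it contains `q`, consists of descendants of `q`, is
closed under taking parents (down to `q`), and is totally ordered by descendancy. -/
def IsChainAt (T : PTree V) (q : V) (S : Set V) : Prop :=
  q ∈ S ∧ (∀ r ∈ S, T.desc r q) ∧ (∀ r ∈ S, r ≠ q → T.parent r ∈ S) ∧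
    ∀ r ∈ S, ∀ s ∈ S, T.desc r s ∨ T.desc s r

/-- `S` is a bi-chain rooted at `q` : the union of two chains rooted at `q`, each with at
least two vertices, whose only common vertex is `q`. -/
def IsBichainAt (T : PTree V) (q : V) (S : Set V) : Prop :=
  ∃ S₁ S₂ : Set V, T.IsChainAt q S₁ ∧ T.IsChainAt q S₂ ∧ S = S₁ ∪ S₂ ∧
    S₁ ∩ S₂ = {q} ∧ (∃ r ∈ S₁, r ≠ q) ∧ (∃ r ∈ S₂, r ≠ q)

end PTree

theorem PTree.aux_depth {V : Type} (T : PTree V) (v : V) (h : T.depth v = 0) : v = T.root := by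
  by_contra hv
  have := T.depth_eq v hv
  omega

theorem PTree.aux_iter {V : Type} (T : PTree V) (k : ℕ) (v : V) :
    T.depth (T.parent^[k] v) = T.depth v - k := by
  induction k generalizing v with
  | zero => simp
  | succ k ih =>
    rw [Function.iterate_succ_apply, ih]
    by_cases hv : v = T.root
    · subst hv
      rw [T.parent_root, T.depth_root]
      omega
    · have := T.depth_eq v hv
      omega

theorem PTree.aux_desc {V : Type} (T : PTree V) (r q : V) (h : T.desc r q) :
    T.depth q ≤ T.depth r ∧ T.parent^[T.depth r - T.depth q] r = q := by
  obtain ⟨k, hk⟩ := h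
  have h1 := T.aux_iter k r
  rw [hk] at h1
  refine ⟨by omega, ?_⟩
  by_cases hkr : k ≤ T.depth r
  · have : T.depth r - T.depth q = k := by omega
    rw [this, hk]
  · have hq : q = T.root := T.aux_depth q (by omega)
    rw [hq]
    apply T.aux_depth
    rw [T.aux_iter, T.depth_root]
    omega

theorem PTree.aux_key {V : Type} (T : PTree V) (w : V → ℕ) (q : V) (a b : ℕ) (v : V)
    (hv : v ≠ T.root) (h1 : v ∈ T.gammaSet w q a b) (h2 : T.parent v ∈ T.gammaSet w q a b) :
    ∃ n, T.parent^[n+1] v = q ∧ T.depth v = T.depth q + (n + 1) ∧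
      ((w (T.parent^[n] v) = a ∧ ∀ i, i < n → w (T.parent^[i] v) = b) ∨
       (w (T.parent^[n] v) = b ∧ ∀ i, i < n → w (T.parent^[i] v) = a)) := by
  have hd := T.depth_eq v hv
  have hp : T.depth q ≤ T.depth (T.parent v) := by
    rcases h2 with h2 | ⟨h2, -⟩
    · rw [h2]
    · exact (T.aux_desc _ _ h2.1).1
  rcases h1 with h1 | ⟨h1, h3⟩
  · subst h1; omega
  · have h4 := (T.aux_desc _ _ h1.1).2
    refine ⟨T.depth v - T.depth q - 1, ?_, by omega, ?_⟩
    · have : T.depth v - T.depth q - 1 + 1 = T.depth v - T.depth q := by omega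
      rw [this, h4]
    · unfold PTree.codeAB PTree.codeLen at h3
      rcases h3 with ⟨h3, h5⟩ | ⟨h3, h5⟩
      · exact Or.inl ⟨h3, fun i hi => h5 i (by omega)⟩
      · exact Or.inr ⟨h3, fun i hi => h5 i (by omega)⟩

theorem PTree.gammaSet_symm {V : Type} (T : PTree V) (w : V → ℕ) (q : V) (a b : ℕ) :
    T.gammaSet w q a b = T.gammaSet w q b a := by
  ext r
  simp only [PTree.gammaSet, Set.mem_setOf_eq]
  tauto

theorem PTree.aux_lt {V : Type} (T : PTree V) (d : ℕ) (w : V → ℕ) (hw : T.IsWeighting d w)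
    (q q' : V) (a b a' b' : ℕ) (hab : a ≠ b) (hab' : a' ≠ b') (hq : T.depth q < T.depth q')
    (v v' : V) (hv : v ≠ T.root) (hv' : v' ≠ T.root)
    (h1 : v ∈ T.gammaSet w q a b) (h2 : T.parent v ∈ T.gammaSet w q a b)
    (h3 : v ∈ T.gammaSet w q' a' b') (h4 : T.parent v ∈ T.gammaSet w q' a' b')
    (h1' : v' ∈ T.gammaSet w q a b) (h2' : T.parent v' ∈ T.gammaSet w q a b)
    (h3' : v' ∈ T.gammaSet w q' a' b') (h4' : T.parent v' ∈ T.gammaSet w q' a' b') :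
    v = v' := by
  have key : ∀ u, u ≠ T.root → u ∈ T.gammaSet w q a b → T.parent u ∈ T.gammaSet w q a b →
      u ∈ T.gammaSet w q' a' b' → T.parent u ∈ T.gammaSet w q' a' b' →
      T.parent u = q' ∧
      ((w (T.parent^[T.depth q' - T.depth q - 1] q') = a ∧ w u = b) ∨
       (w (T.parent^[T.depth q' - T.depth q - 1] q') = b ∧ w u = a)) := by
    intro u hu k1 k2 k3 k4
    obtain ⟨n, e1, e2, e3⟩ := T.aux_key w q a b u hu k1 k2
    obtain ⟨m, f1, f2, f3⟩ := T.aux_key w q' a' b' u hu k3 k4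
    have hm : m = 0 := by
      by_contra hm
      have g1 : w (T.parent^[m] u) = w (T.parent^[0] u) := by
        rcases e3 with ⟨-, e⟩ | ⟨-, e⟩ <;> rw [e m (by omega), e 0 (by omega)]
      rcases f3 with ⟨f, f'⟩ | ⟨f, f'⟩ <;>
      · have := f' 0 (by omega)
        omega
    subst hm
    have f4 : T.parent u = q' := f1
    refine ⟨f4, ?_⟩
    have hn : n = (T.depth q' - T.depth q - 1) + 1 := by omega
    have g : T.parent^[n] u = T.parent^[T.depth q' - T.depth q - 1] q' := by
      rw [hn, Function.iterate_succ_apply, f4]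
    rw [g] at e3
    rcases e3 with ⟨e, e'⟩ | ⟨e, e'⟩
    · exact Or.inl ⟨e, e' 0 (by omega)⟩
    · exact Or.inr ⟨e, e' 0 (by omega)⟩
  obtain ⟨p1, p2⟩ := key v hv h1 h2 h3 h4
  obtain ⟨p1', p2'⟩ := key v' hv' h1' h2' h3' h4'
  by_contra hne
  exact hw.2 v v' hv hv' (p1.trans p1'.symm) hne (by omega)

theorem PTree.aux_pair {V : Type} (T : PTree V) (w : V → ℕ)
    (q : V) (a b a' b' : ℕ) (hS : T.gammaSet w q a b ≠ T.gammaSet w q a' b')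
    (h : (a = a' ∧ b = b') ∨ (a = b' ∧ b = a')) : False := by
  rcases h with ⟨rfl, rfl⟩ | ⟨rfl, rfl⟩
  · exact hS rfl
  · exact hS (T.gammaSet_symm w q a b)

theorem PTree.aux_eq {V : Type} (T : PTree V) (d : ℕ) (w : V → ℕ) (hw : T.IsWeighting d w)
    (q : V) (a b a' b' : ℕ) (hab : a ≠ b) (hab' : a' ≠ b')
    (hS : T.gammaSet w q a b ≠ T.gammaSet w q a' b')
    (v v' : V) (hv : v ≠ T.root) (hv' : v' ≠ T.root)
    (h1 : v ∈ T.gammaSet w q a b) (h2 : T.parent v ∈ T.gammaSet w q a b)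
    (h3 : v ∈ T.gammaSet w q a' b') (h4 : T.parent v ∈ T.gammaSet w q a' b')
    (h1' : v' ∈ T.gammaSet w q a b) (h2' : T.parent v' ∈ T.gammaSet w q a b)
    (h3' : v' ∈ T.gammaSet w q a' b') (h4' : T.parent v' ∈ T.gammaSet w q a' b') :
    v = v' := by
  have key : ∀ u, u ≠ T.root → u ∈ T.gammaSet w q a b → T.parent u ∈ T.gammaSet w q a b →
      u ∈ T.gammaSet w q a' b' → T.parent u ∈ T.gammaSet w q a' b' →
      T.parent u = q ∧ (w u = a ∨ w u = b) ∧ (w u = a' ∨ w u = b') := by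
    intro u hu k1 k2 k3 k4
    obtain ⟨n, e1, e2, e3⟩ := T.aux_key w q a b u hu k1 k2
    obtain ⟨m, f1, f2, f3⟩ := T.aux_key w q a' b' u hu k3 k4
    obtain rfl : n = m := by omega
    by_cases hn : n = 0
    · subst hn
      refine ⟨e1, ?_, ?_⟩
      · exact e3.imp (fun h => h.1) (fun h => h.1)
      · exact f3.imp (fun h => h.1) (fun h => h.1)
    · exfalso
      apply T.aux_pair w q a b a' b' hS
      rcases e3 with ⟨e, e'⟩ | ⟨e, e'⟩ <;> rcases f3 with ⟨f, f'⟩ | ⟨f, f'⟩ <;>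
      · have := e' 0 (by omega)
        have := f' 0 (by omega)
        omega
  obtain ⟨p1, p2⟩ := key v hv h1 h2 h3 h4
  obtain ⟨p1', p2'⟩ := key v' hv' h1' h2' h3' h4'
  by_contra hne
  have := hw.2 v v' hv hv' (p1.trans p1'.symm) hne
  exact T.aux_pair w q a b a' b' hS (by omega)

/-- For every `d ≥ 2` and every `d`-weighting `α` of a finite rooted
tree, any two distinct members of `⋃_{q} Γ_α(q)` have at most one edge of `Γ` in common.
(An edge is determined by its lower vertex `v ≠ root`, the edge being `{v, parent v}`.) -/
theorem gammaFam_share_at_most_one_edge {V : Type} [Fintype V] (T : PTree V)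
    (d : ℕ) (hd : 2 ≤ d) (w : V → ℕ) (hw : T.IsWeighting d w) :
    ∀ q q' : V, ∀ S S' : Set V, S ∈ T.gammaFam w d q → S' ∈ T.gammaFam w d q' → S ≠ S' →
      ∀ v v' : V,
        v ≠ T.root → v ∈ S → T.parent v ∈ S → v ∈ S' → T.parent v ∈ S' →
        v' ≠ T.root → v' ∈ S → T.parent v' ∈ S → v' ∈ S' → T.parent v' ∈ S' →
        v = v' := by
  rintro q q' S S' ⟨a, b, hab, -, -, -, -, rfl, -⟩ ⟨a', b', hab', -, -, -, -, rfl, -⟩ hS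
    v v' hv h1 h2 h3 h4 hv' h1' h2' h3' h4'
  rcases lt_trichotomy (T.depth q) (T.depth q') with h | h | h
  · exact T.aux_lt d w hw q q' a b a' b' hab hab' h v v' hv hv' h1 h2 h3 h4 h1' h2' h3' h4'
  · obtain ⟨n, e1, e2, -⟩ := T.aux_key w q a b v hv h1 h2
    obtain ⟨m, f1, f2, -⟩ := T.aux_key w q' a' b' v hv h3 h4
    obtain rfl : n = m := by omega
    obtain rfl : q = q' := e1.symm.trans f1
    exact T.aux_eq d w hw q a b a' b' hab hab' hS v v' hv hv' h1 h2 h3 h4 h1' h2' h3' h4'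
  · exact T.aux_lt d w hw q' q a' b' a b hab' hab h v v' hv hv' h3 h4 h1 h2 h3' h4' h1' h2'
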